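/- arXiv:2310.02243 — 2 statements merged into one kernel-verified Lean document; each statement's English description precedes it below -/
import Mathlib

section
/- For all positive integers k, ℓ and all real numbers x, y, one has 0.5(x − y)(1 + 0.25(x − y)^2)(q_{k,ℓ}(x) − q_{k,ℓ}(y)) − 0.00025(x − y)^2 p_{k,ℓ}(x) ≥ 0. -/
open scoped BigOperators

/-- `taylorExp ℓ x = ∑_{k=0}^{ℓ} x^k/k!`, the degree-`ℓ` truncation of the Taylor
series of `e^x`. -/
noncomputable def taylorExp (ℓ : ℕ) (x : ℝ) : ℝ :=
  ∑ k ∈ Finset.range (ℓ + 1), x ^ k / (Nat.factorial k : ℝ)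

/-- `pkl k ℓ x = ∏_{j=1}^{k} s_{2^j ℓ}(x/k)`. -/
noncomputable def pkl (k ℓ : ℕ) (x : ℝ) : ℝ :=
  ∏ j ∈ Finset.Icc 1 k, taylorExp (2 ^ j * ℓ) (x / (k : ℝ))

/-- `qkl k ℓ x = 1 + ∫_0^x pkl k ℓ y dy`. -/
noncomputable def qkl (k ℓ : ℕ) (x : ℝ) : ℝ :=
  1 + ∫ y in (0:ℝ)..x, pkl k ℓ y

/-!
For even `n`, the truncation `s = s_n` satisfies `s' = s - x ^ n / n!` and
`0 ≤ x ^ n / n! ≤ 5 s(x)`, so `|s'| ≤ 4 s`: the logarithm of `s` is `4`-Lipschitz. Rescaling the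
argument by `k` and multiplying `k` such factors preserves the constant, so `log p_{k,ℓ}` is
`4`-Lipschitz as well. Hence `p(u) ≥ exp (-4|x - u|) p(x)`, and integrating over `u` between `x`
and `y` gives `(x - y) (q(x) - q(y)) ≥ (x - y)² p(x) / (1 + 4|x - y|)`.

The bound `x ^ n / n! ≤ 5 s(x)` is only at issue for `x < 0`. There `s(x) ≥ exp x`, which dominates
`x ^ n / n!` as long as `|x| ≤ n / 4`. Further to the left, `h = 5 s - x ^ n / n!` satisfies
`h' ≤ h`, so by Grönwall its sign propagates from `-n / 4` to `-∞`.
-/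

open Set Real
open scoped Nat

lemma le_mul_exp_of_hasDerivAt_le {f f' : ℝ → ℝ} {c a b : ℝ} (hab : a ≤ b)
    (hf : ∀ x ∈ Icc a b, HasDerivAt f (f' x) x) (hf' : ∀ x ∈ Ico a b, f' x ≤ c * f x) :
    f b ≤ f a * exp (c * (b - a)) := by
  rw [← gronwallBound_ε0]
  refine le_gronwallBound_of_liminf_deriv_right_le (f' := f') (HasDerivAt.continuousOn hf)
    (fun x hx r hr => ?_) le_rfl (by simpa using hf') b (right_mem_Icc.2 hab)
  exact (hf x (Ico_subset_Icc_self hx)).hasDerivWithinAt.liminf_right_slope_le hr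

/-- `LogLipschitzWith c f` says that `log ∘ f` is `c`-Lipschitz, in a multiplicative form which
does not require `f` to be positive and is stable under products. -/
def LogLipschitzWith {α : Type*} [PseudoMetricSpace α] (c : ℝ) (f : α → ℝ) : Prop :=
  ∀ x y, exp (-(c * dist x y)) * f x ≤ f y

namespace LogLipschitzWith

lemma of_abs_deriv_le {f f' : ℝ → ℝ} {c : ℝ} (hf : ∀ x, HasDerivAt f (f' x) x)
    (hf' : ∀ x, |f' x| ≤ c * f x) : LogLipschitzWith c f := by
  intro x y
  rcases le_total x y with hxy | hyx
  · have h : -f y ≤ -f x * exp (-c * (y - x)) :=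
      le_mul_exp_of_hasDerivAt_le hxy (fun u _ => (hf u).neg)
        fun u _ => by rw [Pi.neg_apply]; linarith [neg_le_of_abs_le (hf' u)]
    rw [dist_comm, Real.dist_eq, abs_of_nonneg (sub_nonneg.2 hxy), ← neg_mul]
    linarith
  · have h : f x ≤ f y * exp (c * (x - y)) :=
      le_mul_exp_of_hasDerivAt_le hyx (fun u _ => hf u) fun u _ => le_of_abs_le (hf' u)
    rwa [Real.dist_eq, abs_of_nonneg (sub_nonneg.2 hyx), mul_comm, exp_neg, ← div_eq_mul_inv,
      div_le_iff₀ (exp_pos _)]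

lemma comp_div_const {f : ℝ → ℝ} {c : ℝ} (hf : LogLipschitzWith c f) (r : ℝ) :
    LogLipschitzWith (c / |r|) fun x => f (x / r) := by
  intro x y
  have hdist : c / |r| * dist x y = c * dist (x / r) (y / r) := by
    rw [Real.dist_eq, Real.dist_eq, ← sub_div, abs_div, div_mul_eq_mul_div, mul_div_assoc]
  rw [hdist]
  exact hf _ _

lemma prod {α ι : Type*} [PseudoMetricSpace α] {s : Finset ι} {f : ι → α → ℝ} {c : ι → ℝ}
    (hf : ∀ i ∈ s, LogLipschitzWith (c i) (f i)) (hf₀ : ∀ i ∈ s, ∀ x, 0 ≤ f i x) :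
    LogLipschitzWith (∑ i ∈ s, c i) fun x => ∏ i ∈ s, f i x := by
  intro x y
  rw [Finset.sum_mul, ← Finset.sum_neg_distrib, exp_sum, ← Finset.prod_mul_distrib]
  exact Finset.prod_le_prod (fun i hi => mul_nonneg (exp_pos _).le (hf₀ i hi x))
    fun i hi => hf i hi x y

end LogLipschitzWith

lemma one_le_one_add_mul_integral_exp_neg {c : ℝ} (hc : 0 ≤ c) :
    1 ≤ (1 + c) * ∫ t in (0 : ℝ)..1, exp (-(c * t)) := by
  have hint : c * ∫ t in (0 : ℝ)..1, exp (-(c * t)) = 1 - exp (-c) := by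
    have h := intervalIntegral.mul_integral_comp_mul_left (a := 0) (b := 1) (f := exp) (-c)
    simp only [neg_mul, mul_zero, mul_one, integral_exp, Real.exp_zero] at h
    linarith
  have hlower : exp (-c) ≤ ∫ t in (0 : ℝ)..1, exp (-(c * t)) := by
    calc exp (-c) = ∫ _ in (0 : ℝ)..1, exp (-c) := by simp
      _ ≤ ∫ t in (0 : ℝ)..1, exp (-(c * t)) := by
        refine intervalIntegral.integral_mono_on zero_le_one (by simp)
          (Continuous.intervalIntegrable (by fun_prop) _ _) fun t ht => ?_
        exact exp_le_exp.2 (neg_le_neg (mul_le_of_le_one_right hc ht.2))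
  linarith

lemma LogLipschitzWith.sq_mul_le_mul_integral {f : ℝ → ℝ} {c x : ℝ} (hf : LogLipschitzWith c f)
    (hcont : Continuous f) (hc : 0 ≤ c) (hx : 0 ≤ f x) (y : ℝ) :
    (y - x) ^ 2 * f x ≤ (1 + c * |y - x|) * ((y - x) * ∫ u in x..y, f u) := by
  set K := c * |y - x|
  have hK : 0 ≤ K := by positivity
  have hsubst : ∫ u in x..y, f u = (y - x) * ∫ t in (0 : ℝ)..1, f (x + (y - x) * t) := by
    rw [← smul_eq_mul, intervalIntegral.smul_integral_comp_add_mul, mul_zero, add_zero, mul_one,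
      add_sub_cancel]
  have hlower : (∫ t in (0 : ℝ)..1, exp (-(K * t))) * f x
      ≤ ∫ t in (0 : ℝ)..1, f (x + (y - x) * t) := by
    rw [← intervalIntegral.integral_mul_const]
    refine intervalIntegral.integral_mono_on zero_le_one
      (Continuous.intervalIntegrable (by fun_prop) _ _)
      (Continuous.intervalIntegrable (by fun_prop) _ _) fun t ht => ?_
    have hdist : c * dist x (x + (y - x) * t) = K * t := by
      rw [dist_self_add_right, norm_mul, norm_of_nonneg ht.1, Real.norm_eq_abs, mul_assoc]
    rw [← hdist]
    exact hf _ _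
  calc (y - x) ^ 2 * f x
      ≤ (y - x) ^ 2 * (((1 + K) * ∫ t in (0 : ℝ)..1, exp (-(K * t))) * f x) := by
        gcongr
        exact le_mul_of_one_le_left hx (one_le_one_add_mul_integral_exp_neg hK)
    _ = (1 + K) * ((y - x) ^ 2 * ((∫ t in (0 : ℝ)..1, exp (-(K * t))) * f x)) := by ring
    _ ≤ (1 + K) * ((y - x) ^ 2 * ∫ t in (0 : ℝ)..1, f (x + (y - x) * t)) := by gcongr
    _ = (1 + K) * ((y - x) * ∫ u in x..y, f u) := by rw [hsubst]; ring

section TaylorExp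

variable {n : ℕ}

lemma taylorExp_succ (n : ℕ) (x : ℝ) :
    taylorExp (n + 1) x = taylorExp n x + x ^ (n + 1) / (n + 1)! :=
  Finset.sum_range_succ _ _

lemma taylorExp_apply_zero (n : ℕ) : taylorExp n 0 = 1 := by
  simp [taylorExp, Finset.sum_range_succ']

lemma continuous_taylorExp (n : ℕ) : Continuous (taylorExp n) := by
  unfold taylorExp
  fun_prop

lemma pow_div_factorial_le_taylorExp_of_nonneg (n : ℕ) {x : ℝ} (hx : 0 ≤ x) :
    x ^ n / n ! ≤ taylorExp n x :=
  Finset.single_le_sum (f := fun k => x ^ k / k !) (fun _ _ => by positivity)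
    (Finset.self_mem_range_succ n)

lemma pow_div_factorial_nonneg (hn : Even n) (x : ℝ) : 0 ≤ x ^ n / n ! :=
  div_nonneg (hn.pow_nonneg x) (by positivity)

lemma hasDerivAt_pow_succ_div_factorial (n : ℕ) (x : ℝ) :
    HasDerivAt (fun x : ℝ => x ^ (n + 1) / (n + 1)!) (x ^ n / n !) x := by
  refine ((hasDerivAt_pow (n + 1) x).div_const ((n + 1)! : ℝ)).congr_deriv ?_
  rw [Nat.factorial_succ]
  push_cast
  field_simp

lemma hasDerivAt_taylorExp (n : ℕ) (x : ℝ) :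
    HasDerivAt (taylorExp n) (taylorExp n x - x ^ n / n !) x := by
  induction n with
  | zero =>
    have hconst : taylorExp 0 = fun _ => 1 := funext fun _ => by simp [taylorExp]
    simpa [hconst] using hasDerivAt_const x (1 : ℝ)
  | succ n ih =>
    have hderiv := ih.add (hasDerivAt_pow_succ_div_factorial n x)
    rw [sub_add_cancel] at hderiv
    rw [taylorExp_succ, add_sub_cancel_right]
    exact hderiv.congr_of_eventuallyEq (.of_forall (taylorExp_succ n))

lemma exp_le_taylorExp_of_nonpos (hn : Even n) {x : ℝ} (hx : x ≤ 0) : exp x ≤ taylorExp n x := by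
  have h : taylorExp n 0 ≤ taylorExp n x * exp (1 * (0 - x)) :=
    le_mul_exp_of_hasDerivAt_le hx (fun u _ => hasDerivAt_taylorExp n u)
      fun u _ => by linarith [pow_div_factorial_nonneg hn u]
  rwa [taylorExp_apply_zero, one_mul, zero_sub, exp_neg, ← div_eq_mul_inv,
    one_le_div (exp_pos x)] at h

lemma pow_div_factorial_le_exp_neg {x : ℝ} (hx : 0 ≤ x) (hxn : 4 * x ≤ n) :
    x ^ n / n ! ≤ exp (-x) := by
  have hexp : exp n ≤ 3 ^ n := by
    rw [← mul_one (n : ℝ), exp_nat_mul]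
    exact pow_le_pow_left₀ (exp_pos 1).le exp_one_lt_three.le n
  refine le_of_mul_le_mul_left ?_ (show (0 : ℝ) < 3 ^ n by positivity)
  calc (3 : ℝ) ^ n * (x ^ n / n !) = (3 * x) ^ n / n ! := by rw [mul_pow, mul_div_assoc]
    _ ≤ exp (3 * x) := Real.pow_div_factorial_le_exp (3 * x) (by positivity) n
    _ ≤ exp (n + -x) := exp_le_exp.2 (by linarith)
    _ = exp n * exp (-x) := exp_add _ _
    _ ≤ 3 ^ n * exp (-x) := by gcongr

lemma pow_div_factorial_le_taylorExp (hn : Even n) {x : ℝ} (hx : -n ≤ 4 * x) :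
    x ^ n / n ! ≤ taylorExp n x := by
  rcases le_total 0 x with hx₀ | hx₀
  · exact pow_div_factorial_le_taylorExp_of_nonneg n hx₀
  · calc x ^ n / n ! = (-x) ^ n / n ! := by rw [hn.neg_pow]
      _ ≤ exp (- -x) := pow_div_factorial_le_exp_neg (by linarith) (by linarith)
      _ = exp x := by rw [neg_neg]
      _ ≤ taylorExp n x := exp_le_taylorExp_of_nonpos hn hx₀

lemma neg_four_mul_pow_le_mul_pow_sub_one (hn : Even n) {x : ℝ} (hx : 4 * x ≤ -n) :
    -4 * x ^ n ≤ n * x ^ (n - 1) := by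
  cases n with
  | zero => simp
  | succ m =>
    have hodd : Odd m := by simpa [Nat.even_add_one] using hn
    have hpow : x ^ m ≤ 0 := hodd.pow_nonpos (by push_cast at hx; linarith)
    have := mul_nonneg_of_nonpos_of_nonpos hpow (show 4 * x + (m + 1 : ℕ) ≤ 0 by linarith)
    rw [Nat.add_sub_cancel, pow_succ]
    linarith

lemma pow_div_factorial_le_five_mul_taylorExp (hn : Even n) (x : ℝ) :
    x ^ n / n ! ≤ 5 * taylorExp n x := by
  have hright : ∀ u : ℝ, -n ≤ 4 * u → u ^ n / n ! ≤ 5 * taylorExp n u := fun u hu => by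
    linarith [pow_div_factorial_le_taylorExp hn hu, pow_div_factorial_nonneg hn u]
  rcases le_total (-n : ℝ) (4 * x) with hx | hx
  · exact hright x hx
  obtain ⟨a, ha⟩ : ∃ a : ℝ, 4 * a = -n := ⟨-n / 4, by ring⟩
  have hxa : x ≤ a := by linarith
  set h : ℝ → ℝ := fun u => 5 * taylorExp n u - u ^ n / (n ! : ℝ)
  have hgronwall : h a ≤ h x * exp (1 * (a - x)) := by
    refine le_mul_exp_of_hasDerivAt_le hxa (fun u _ =>
      ((hasDerivAt_taylorExp n u).const_mul 5).sub ((hasDerivAt_pow n u).div_const _))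
      fun u hu => ?_
    have hderiv : -4 * u ^ n / n ! ≤ n * u ^ (n - 1) / n ! := by
      refine div_le_div_of_nonneg_right ?_ (by positivity)
      exact neg_four_mul_pow_le_mul_pow_sub_one hn (by linarith [hu.2])
    simp only [h]
    rw [mul_div_assoc] at hderiv
    linarith
  have hha : 0 ≤ h a := sub_nonneg.2 (hright a ha.ge)
  exact sub_nonneg.1 (nonneg_of_mul_nonneg_left (hha.trans hgronwall) (exp_pos _))

lemma taylorExp_nonneg (hn : Even n) (x : ℝ) : 0 ≤ taylorExp n x := by
  linarith [pow_div_factorial_le_five_mul_taylorExp hn x, pow_div_factorial_nonneg hn x]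

lemma logLipschitzWith_taylorExp (hn : Even n) : LogLipschitzWith 4 (taylorExp n) := by
  refine .of_abs_deriv_le (hasDerivAt_taylorExp n) fun x => ?_
  rw [abs_le]
  constructor <;>
    linarith [pow_div_factorial_le_five_mul_taylorExp hn x, pow_div_factorial_nonneg hn x,
      taylorExp_nonneg hn x]

end TaylorExp

lemma even_two_pow_mul_of_mem_Icc {k j : ℕ} (ℓ : ℕ) (hj : j ∈ Finset.Icc 1 k) :
    Even (2 ^ j * ℓ) :=
  (even_two.pow_of_ne_zero (Nat.one_le_iff_ne_zero.1 (Finset.mem_Icc.1 hj).1)).mul_right ℓ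

lemma pkl_nonneg (k ℓ : ℕ) (x : ℝ) : 0 ≤ pkl k ℓ x :=
  Finset.prod_nonneg fun _ hj => taylorExp_nonneg (even_two_pow_mul_of_mem_Icc ℓ hj) _

lemma continuous_pkl (k ℓ : ℕ) : Continuous (pkl k ℓ) :=
  continuous_finsetProd _ fun _ _ => (continuous_taylorExp _).comp (continuous_id.div_const _)

lemma logLipschitzWith_pkl {k : ℕ} (hk : 0 < k) (ℓ : ℕ) : LogLipschitzWith 4 (pkl k ℓ) := by
  have hprod : LogLipschitzWith (∑ _j ∈ Finset.Icc 1 k, 4 / |(k : ℝ)|) (pkl k ℓ) :=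
    .prod (fun _ hj =>
        (logLipschitzWith_taylorExp (even_two_pow_mul_of_mem_Icc ℓ hj)).comp_div_const k)
      fun _ hj _ => taylorExp_nonneg (even_two_pow_mul_of_mem_Icc ℓ hj) _
  have hsum : ∑ _j ∈ Finset.Icc 1 k, 4 / |(k : ℝ)| = 4 := by
    rw [Finset.sum_const, Nat.card_Icc, Nat.add_sub_cancel, nsmul_eq_mul, Nat.abs_cast]
    field_simp
  rwa [hsum] at hprod

lemma qkl_sub_qkl (k ℓ : ℕ) (x y : ℝ) : qkl k ℓ x - qkl k ℓ y = ∫ u in y..x, pkl k ℓ u := by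
  have hint (a b : ℝ) : IntervalIntegrable (pkl k ℓ) MeasureTheory.volume a b :=
    (continuous_pkl k ℓ).intervalIntegrable a b
  rw [qkl, qkl, add_sub_add_left_eq_sub,
    intervalIntegral.integral_interval_sub_left (hint 0 x) (hint 0 y)]

lemma sq_mul_pkl_le_mul_qkl_sub {k : ℕ} (hk : 0 < k) (ℓ : ℕ) (x y : ℝ) :
    (x - y) ^ 2 * pkl k ℓ x ≤ (1 + 4 * |x - y|) * ((x - y) * (qkl k ℓ x - qkl k ℓ y)) := by
  have h := (logLipschitzWith_pkl hk ℓ).sq_mul_le_mul_integral (continuous_pkl k ℓ) zero_le_four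
    (pkl_nonneg k ℓ x) y
  rw [← qkl_sub_qkl] at h
  rw [abs_sub_comm x y]
  linarith

/-- **Monotonicity of the flat approximations** (inequality part of Theorem 4.4):
for all positive integers `k, ℓ` and all reals `x, y`,
`0.5(x-y)(1+0.25(x-y)²)(q_{k,ℓ}(x) - q_{k,ℓ}(y)) - 0.00025(x-y)² p_{k,ℓ}(x) ≥ 0`. -/
theorem monotone_flat_approx (k ℓ : ℕ) (hk : 0 < k) (hℓ : 0 < ℓ) (x y : ℝ) :
    0 ≤ 0.5 * (x - y) * (1 + 0.25 * (x - y) ^ 2) * (qkl k ℓ x - qkl k ℓ y)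
        - 0.00025 * (x - y) ^ 2 * pkl k ℓ x := by
  set Q := (x - y) * (qkl k ℓ x - qkl k ℓ y)
  have hbound : (x - y) ^ 2 * pkl k ℓ x ≤ (1 + 4 * |x - y|) * Q :=
    sq_mul_pkl_le_mul_qkl_sub hk ℓ x y
  have hQ_nonneg : 0 ≤ Q :=
    nonneg_of_mul_nonneg_right
      ((mul_nonneg (sq_nonneg _) (pkl_nonneg k ℓ x)).trans hbound) (by positivity)
  have hcoeff : 0.00025 * (1 + 4 * |x - y|) ≤ 0.5 * (1 + 0.25 * (x - y) ^ 2) := by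
    rw [← sq_abs (x - y)]
    nlinarith [sq_nonneg (|x - y| - 1)]
  have hmain := mul_le_mul_of_nonneg_right hcoeff hQ_nonneg
  linarith
end

section
/- Let ℓ be a positive integer and let c be a real number with −0.01 ≤ c ≤ 0.01. Then the polynomial s_{2ℓ}(x) + c·s_{2ℓ−1}(x) is a (2^ℓ, ℓ, 10^ℓ)-bounded sum-of-squares polynomial in x. -/
open scoped BigOperators

/-- The degree-`ℓ` truncation of the Taylor series of `e^x`, as a real polynomial:
`sPoly ℓ = ∑_{k=0}^{ℓ} x^k/k!`. -/
noncomputable def sPoly (ℓ : ℕ) : Polynomial ℝ :=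
  ∑ k ∈ Finset.range (ℓ + 1), Polynomial.C (1 / (Nat.factorial k : ℝ)) * Polynomial.X ^ k

/-- A univariate real polynomial is `(d, C)`-bounded if it has degree at most `d` and,
for every `d' ≤ d`, the coefficient of `x^{d'}` has magnitude at most `C/d'!`. -/
def UniBounded (d : ℕ) (C : ℝ) (f : Polynomial ℝ) : Prop :=
  f.natDegree ≤ d ∧ ∀ n ≤ d, |f.coeff n| ≤ C / (Nat.factorial n : ℝ)

/-- A univariate real polynomial is a `(k, d, C)`-bounded sum-of-squares polynomial if
it can be written as `q₁² + ⋯ + q_k²` with each `qᵢ` a `(d, C)`-bounded polynomial. -/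
def UniSoSBounded (k d : ℕ) (C : ℝ) (f : Polynomial ℝ) : Prop :=
  ∃ g : Fin k → Polynomial ℝ, (∀ i, UniBounded d C (g i)) ∧ f = ∑ i, (g i) ^ 2

/-!
A polynomial that is nonnegative on `ℝ` is a sum `p ^ 2 + q ^ 2` of two squares: split off the
quadratic factors `(X - a) ^ 2 + b ^ 2` given by its complex roots and multiply back with
Brahmagupta's identity. At a natural number `j`, both `|p j|` and `|q j|` are at most the square
root of the polynomial's value, here of order `exp (j / 2)`, so the forward differences of `p` and
`q` at `0` grow at most geometrically, and Newton's expansion in falling factorials bounds the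
coefficients.

Nonnegativity is delicate only for `c > 0` and `x < 0`. With `n = 2ℓ` write
`F = s_n + c s_{n-1} = (1 + c) s_n - c x ^ n / n!`. For `-c n ≤ x ≤ 0` one has
`x ^ n / n! ≤ exp x ≤ s_n`. For `x ≤ -c n` one has `F' ≤ F`, so `exp (-x) * F x` decreases up to
`x = -c n`, where it is nonnegative by the first case.
-/

open Polynomial

section SumOfTwoSquares

lemma eval_nonneg_of_forall_eval_mul_nonneg {p q : ℝ[X]} (hp : p ≠ 0)
    (hp_nonneg : ∀ x, 0 ≤ p.eval x) (hpq : ∀ x, 0 ≤ (p * q).eval x) (x : ℝ) : 0 ≤ q.eval x := by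
  have hdense : Dense {x | p.eval x ≠ 0} :=
    (finite_setOfPred_isRoot hp).countable.dense_compl ℝ
  have hclosed : IsClosed {x | 0 ≤ q.eval x} := isClosed_le continuous_const q.continuous
  refine hclosed.closure_subset_iff.mpr (fun y hy ↦ ?_) (hdense x)
  have hpy : 0 < p.eval y := (hp_nonneg y).lt_of_ne' hy
  exact nonneg_of_mul_nonneg_right (eval_mul (p := p) (q := q) ▸ hpq y) hpy

lemma X_sub_C_sq_dvd_of_isRoot_of_forall_eval_nonneg {f : ℝ[X]} (hf : ∀ x, 0 ≤ f.eval x) {a : ℝ}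
    (ha : f.IsRoot a) : (X - C a) ^ 2 ∣ f := by
  rcases eq_or_ne f 0 with rfl | hf0
  · exact dvd_zero _
  have hmin : IsLocalMin (fun x ↦ f.eval x) a := .of_forall fun x ↦ ha.le.trans (hf x)
  have hderiv : f.derivative.IsRoot a := hmin.hasDerivAt_eq_zero (f.hasDerivAt a)
  exact (le_rootMultiplicity_iff hf0).mp ((one_lt_rootMultiplicity_iff_isRoot hf0).mpr ⟨ha, hderiv⟩)

lemma exists_X_sub_C_sq_add_C_sq_dvd {f : ℝ[X]} (hf : ∀ x, 0 ≤ f.eval x)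
    (hdeg : f.natDegree ≠ 0) : ∃ a b : ℝ, (X - C a) ^ 2 + C b ^ 2 ∣ f := by
  obtain ⟨z, hz⟩ := IsAlgClosed.exists_aeval_eq_zero ℂ f
    fun h ↦ hdeg (natDegree_eq_of_degree_eq_some h)
  refine ⟨z.re, z.im, ?_⟩
  by_cases him : z.im = 0
  · have hroot : f.IsRoot z.re := by
      have hz_real : z = algebraMap ℝ ℂ z.re := Complex.ext rfl him
      rwa [hz_real, aeval_algebraMap_apply_eq_algebraMap_eval, Complex.coe_algebraMap,
        Complex.ofReal_eq_zero] at hz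
    simpa [him] using X_sub_C_sq_dvd_of_isRoot_of_forall_eval_nonneg hf hroot
  · convert f.quadratic_dvd_of_aeval_eq_zero_im_ne_zero hz him using 1
    rw [Complex.sq_norm, Complex.normSq_apply]
    simp only [C_add, C_mul, C_ofNat]
    ring

theorem exists_eq_sq_add_sq_of_forall_eval_nonneg {f : ℝ[X]} (hf : ∀ x, 0 ≤ f.eval x) :
    ∃ p q : ℝ[X], f = p ^ 2 + q ^ 2 := by
  induction hn : f.natDegree using Nat.strong_induction_on generalizing f with
  | _ n ih =>
  by_cases hdeg : f.natDegree = 0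
  · obtain ⟨a, rfl⟩ := natDegree_eq_zero.mp hdeg
    have ha : 0 ≤ a := by simpa using hf 0
    exact ⟨C √a, 0, by rw [← C_pow, Real.sq_sqrt ha]; simp⟩
  obtain ⟨a, b, g, rfl⟩ := exists_X_sub_C_sq_add_C_sq_dvd hf hdeg
  have hquad : ((X - C a) ^ 2 + C b ^ 2 : ℝ[X]).natDegree = 2 := by
    rw [← C_pow, natDegree_add_C, natDegree_pow, natDegree_X_sub_C]
  have hquad0 : ((X - C a) ^ 2 + C b ^ 2 : ℝ[X]) ≠ 0 := ne_zero_of_natDegree_gt (hquad ▸ two_pos)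
  have hg0 : g ≠ 0 := right_ne_zero_of_mul (ne_zero_of_natDegree_gt (Nat.pos_of_ne_zero hdeg))
  have hg : ∀ x, 0 ≤ g.eval x := eval_nonneg_of_forall_eval_mul_nonneg hquad0
    (fun x ↦ by simp only [eval_add, eval_pow, eval_C]; positivity) hf
  obtain ⟨u, v, huv⟩ := ih g.natDegree
    (by rw [← hn, natDegree_mul hquad0 hg0, hquad]; lia) hg rfl
  exact sq_add_sq_mul rfl huv

lemma two_mul_max_natDegree_le_natDegree_sq_add_sq {R : Type*} [CommRing R] [LinearOrder R]
    [IsStrictOrderedRing R] (p q : R[X]) :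
    2 * max p.natDegree q.natDegree ≤ (p ^ 2 + q ^ 2).natDegree := by
  wlog hqp : q.natDegree ≤ p.natDegree generalizing p q
  · rw [max_comm, add_comm]
    exact this q p (le_of_not_ge hqp)
  rw [max_eq_left hqp]
  rcases eq_or_ne p 0 with rfl | hp
  · simp
  refine le_natDegree_of_ne_zero ?_
  rw [coeff_add, coeff_pow_of_natDegree_le le_rfl, coeff_pow_of_natDegree_le hqp]
  have : p.coeff p.natDegree ≠ 0 := leadingCoeff_ne_zero.mpr hp
  positivity

end SumOfTwoSquares

section NewtonExpansion

lemma abs_fwdDiff_iter_le {M R : Type*} [AddCommMonoid M] [CommRing R] [LinearOrder R]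
    [IsStrictOrderedRing R] {f : M → R} {h y : M} {A r : R}
    (hf : ∀ j : ℕ, |f (y + j • h)| ≤ A * r ^ j) (k : ℕ) :
    |(fwdDiff h)^[k] f y| ≤ A * (r + 1) ^ k := by
  induction k generalizing f A with
  | zero => simpa using hf 0
  | succ k ih =>
    have hdiff (j : ℕ) : |fwdDiff h f (y + j • h)| ≤ A * (r + 1) * r ^ j := calc
      |fwdDiff h f (y + j • h)| = |f (y + (j + 1) • h) - f (y + j • h)| := by
        rw [fwdDiff, succ_nsmul, add_assoc]
      _ ≤ |f (y + (j + 1) • h)| + |f (y + j • h)| := abs_sub _ _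
      _ ≤ A * r ^ (j + 1) + A * r ^ j := add_le_add (hf _) (hf _)
      _ = A * (r + 1) * r ^ j := by ring
    calc |(fwdDiff h)^[k] (fwdDiff h f) y| ≤ A * (r + 1) * (r + 1) ^ k := ih hdiff
      _ = A * (r + 1) ^ (k + 1) := by ring

theorem eq_sum_fwdDiff_iter_mul_descPochhammer {K : Type*} [Field K] [CharZero K] {q : K[X]}
    {d : ℕ} (hq : q.natDegree ≤ d) :
    q = ∑ k ∈ Finset.range (d + 1),
      C ((fwdDiff 1)^[k] q.eval 0 / (k.factorial : K)) * descPochhammer K k := by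
  refine eq_of_infinite_eval_eq _ _
    ((Set.infinite_range_of_injective (Nat.cast_injective (R := K))).mono ?_)
  rintro _ ⟨n, rfl⟩
  have hterm (k : ℕ) : (C ((fwdDiff 1)^[k] q.eval 0 / (k.factorial : K)) *
      descPochhammer K k).eval (n : K) = n.choose k • (fwdDiff 1)^[k] q.eval 0 := by
    rw [eval_mul, eval_C, nsmul_eq_mul, Nat.cast_choose_eq_descPochhammer_div]
    ring
  have hnewton : q.eval (n : K) =
      ∑ k ∈ Finset.range (n + 1), n.choose k • (fwdDiff 1)^[k] q.eval 0 := by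
    simpa only [zero_add, nsmul_one] using shift_eq_sum_fwdDiff_iter (1 : K) q.eval n 0
  simp only [Set.mem_ofPred_eq, eval_finsetSum, hterm, hnewton]
  rw [← Finset.eventually_constant_sum (fun k hk ↦ ?_) (le_max_left (n + 1) (d + 1)),
    ← Finset.eventually_constant_sum (fun k hk ↦ ?_) (le_max_right (n + 1) (d + 1))]
  · rw [fwdDiff_iter_eq_zero_of_degree_lt (hq.trans_lt hk), Pi.zero_apply, smul_zero]
  · rw [Nat.choose_eq_zero_of_lt hk, zero_smul]

lemma succ_mul_factorial_mul_choose_add_le (k n : ℕ) :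
    (n + 1) * (k.factorial * k.choose n) + k * (k.factorial * k.choose (n + 1)) ≤
      (k + 1).factorial * (k + 1).choose (n + 1) := by
  have hchoose : (n + 1) * k.choose n ≤ (k + 1) * k.choose n := by
    rcases le_or_gt n k with hnk | hkn
    · gcongr
    · simp [Nat.choose_eq_zero_of_lt hkn]
  rw [Nat.choose_succ_succ, Nat.factorial_succ]
  nlinarith [Nat.mul_le_mul_left k.factorial hchoose,
    Nat.zero_le (k.factorial * k.choose (n + 1))]

lemma factorial_mul_abs_coeff_descPochhammer_le {R : Type*} [CommRing R] [LinearOrder R]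
    [IsStrictOrderedRing R] (k n : ℕ) :
    n.factorial * |(descPochhammer R k).coeff n| ≤ (k.factorial * k.choose n : ℕ) := by
  induction k generalizing n with
  | zero => cases n <;> simp [coeff_one]
  | succ k ih =>
    rw [descPochhammer_succ_right, mul_sub, coeff_sub, ← C_eq_natCast, coeff_mul_C]
    cases n with
    | zero =>
      calc (Nat.factorial 0 : R) * |(descPochhammer R k * X).coeff 0 -
            (descPochhammer R k).coeff 0 * k|
          = k * (Nat.factorial 0 * |(descPochhammer R k).coeff 0|) := by simp [abs_mul, mul_comm]
        _ ≤ k * (k.factorial * k.choose 0 : ℕ) := by gcongr; exact ih 0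
        _ ≤ ((k + 1).factorial * (k + 1).choose 0 : ℕ) := by
            rw [Nat.choose_zero_right, Nat.choose_zero_right, mul_one, mul_one,
              Nat.factorial_succ]
            exact_mod_cast Nat.mul_le_mul_right _ k.le_succ
    | succ n =>
      rw [coeff_mul_X]
      calc ((n + 1).factorial : R) *
            |(descPochhammer R k).coeff n - (descPochhammer R k).coeff (n + 1) * k|
          ≤ (n + 1).factorial *
            (|(descPochhammer R k).coeff n| + |(descPochhammer R k).coeff (n + 1)| * k) := by
            gcongr
            simpa only [abs_mul, Nat.abs_cast] using abs_sub ((descPochhammer R k).coeff n)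
              ((descPochhammer R k).coeff (n + 1) * k)
        _ = (n + 1) * (n.factorial * |(descPochhammer R k).coeff n|) +
            k * ((n + 1).factorial * |(descPochhammer R k).coeff (n + 1)|) := by
            rw [Nat.factorial_succ]; push_cast; ring
        _ ≤ (n + 1) * (k.factorial * k.choose n : ℕ) +
            k * (k.factorial * k.choose (n + 1) : ℕ) := by
            gcongr
            · exact ih n
            · exact ih (n + 1)
        _ ≤ ((k + 1).factorial * (k + 1).choose (n + 1) : ℕ) := by
            exact_mod_cast succ_mul_factorial_mul_choose_add_le k n

theorem factorial_mul_abs_coeff_le_sum {K : Type*} [Field K] [LinearOrder K]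
    [IsStrictOrderedRing K] {q : K[X]} {d : ℕ} {A r : K} (hd : q.natDegree ≤ d)
    (hq : ∀ j : ℕ, |q.eval (j : K)| ≤ A * r ^ j) (n : ℕ) :
    n.factorial * |q.coeff n| ≤ A * ∑ k ∈ Finset.range (d + 1), (k.choose n : K) * (r + 1) ^ k := by
  have hterm (k : ℕ) : n.factorial * |(C ((fwdDiff 1)^[k] q.eval 0 / (k.factorial : K)) *
      descPochhammer K k).coeff n| ≤ A * (k.choose n * (r + 1) ^ k) := by
    have hdiff : |(fwdDiff 1)^[k] q.eval 0| ≤ A * (r + 1) ^ k :=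
      abs_fwdDiff_iter_le (by simpa using hq) k
    calc n.factorial * |(C ((fwdDiff 1)^[k] q.eval 0 / (k.factorial : K)) *
          descPochhammer K k).coeff n|
        = |(fwdDiff 1)^[k] q.eval 0| *
          (n.factorial * |(descPochhammer K k).coeff n| / k.factorial) := by
          rw [coeff_C_mul, abs_mul, abs_div, Nat.abs_cast]; ring
      _ ≤ (A * (r + 1) ^ k) * ((k.factorial * k.choose n : ℕ) / k.factorial) := by
          gcongr
          · exact (abs_nonneg _).trans hdiff
          · exact factorial_mul_abs_coeff_descPochhammer_le k n
      _ = A * (k.choose n * (r + 1) ^ k) := by push_cast; field_simp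
  calc n.factorial * |q.coeff n|
      = n.factorial * |∑ k ∈ Finset.range (d + 1), (C ((fwdDiff 1)^[k] q.eval 0 /
          (k.factorial : K)) * descPochhammer K k).coeff n| := by
        rw [← finsetSum_coeff, ← eq_sum_fwdDiff_iter_mul_descPochhammer hd]
    _ ≤ ∑ k ∈ Finset.range (d + 1), n.factorial * |(C ((fwdDiff 1)^[k] q.eval 0 /
          (k.factorial : K)) * descPochhammer K k).coeff n| := by
        rw [← Finset.mul_sum]
        gcongr
        exact Finset.abs_sum_le_sum_abs _ _
    _ ≤ A * ∑ k ∈ Finset.range (d + 1), (k.choose n : K) * (r + 1) ^ k := by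
        rw [Finset.mul_sum]
        exact Finset.sum_le_sum fun k _ ↦ hterm k

end NewtonExpansion

section TruncatedExponential

lemma eval_sPoly (m : ℕ) (x : ℝ) :
    (sPoly m).eval x = ∑ k ∈ Finset.range (m + 1), x ^ k / k.factorial := by
  simp only [sPoly, eval_finsetSum, eval_mul, eval_C, eval_pow, eval_X, one_div_mul_eq_div]

lemma sPoly_succ (m : ℕ) :
    sPoly (m + 1) = sPoly m + C (1 / ((m + 1).factorial : ℝ)) * X ^ (m + 1) :=
  Finset.sum_range_succ _ _

lemma natDegree_sPoly_le (m : ℕ) : (sPoly m).natDegree ≤ m :=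
  natDegree_sum_le_of_forall_le _ _ fun _ hk ↦
    (natDegree_C_mul_X_pow_le _ _).trans (Finset.mem_range_succ_iff.mp hk)

lemma derivative_sPoly_succ (m : ℕ) : derivative (sPoly (m + 1)) = sPoly m := by
  induction m with
  | zero => simp [sPoly, Finset.sum_range_succ]
  | succ m ih =>
    rw [sPoly_succ (m + 1), derivative_add, ih, sPoly_succ m, derivative_C_mul_X_pow]
    congr 3
    rw [Nat.factorial_succ (m + 1)]
    push_cast
    field_simp

lemma eval_sPoly_nonneg {x : ℝ} (hx : 0 ≤ x) (m : ℕ) : 0 ≤ (sPoly m).eval x := by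
  rw [eval_sPoly]
  positivity

lemma eval_sPoly_le_exp {x : ℝ} (hx : 0 ≤ x) (m : ℕ) : (sPoly m).eval x ≤ Real.exp x :=
  eval_sPoly m x ▸ Real.sum_le_exp_of_nonneg hx _

lemma eval_le_exp_mul_eval_of_derivative_le {p : ℝ[X]} {a b : ℝ} (hab : a ≤ b)
    (hp : ∀ x ∈ Set.Ico a b, p.derivative.eval x ≤ p.eval x) :
    p.eval b ≤ Real.exp (b - a) * p.eval a := by
  have h := le_gronwallBound_of_liminf_deriv_right_le (K := 1) (ε := 0) p.continuousOn
    (fun x _ _ hr ↦ (p.hasDerivAt x).hasDerivWithinAt.liminf_right_slope_le hr) le_rfl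
    (by simpa using hp) b (Set.right_mem_Icc.mpr hab)
  rwa [gronwallBound_ε0, one_mul, mul_comm] at h

lemma exp_le_eval_sPoly_of_even {n : ℕ} (hn : Even n) {x : ℝ} (hx : x ≤ 0) :
    Real.exp x ≤ (sPoly n).eval x := by
  have hderiv (y : ℝ) : (sPoly n).derivative.eval y ≤ (sPoly n).eval y := by
    cases n with
    | zero => simp [sPoly]
    | succ m =>
      have : 0 ≤ y ^ (m + 1) := hn.pow_nonneg y
      rw [derivative_sPoly_succ, sPoly_succ, eval_add, eval_C_mul, eval_pow, eval_X]
      exact le_add_of_nonneg_right (by positivity)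
  have hle : (sPoly n).eval 0 ≤ Real.exp (0 - x) * (sPoly n).eval x :=
    eval_le_exp_mul_eval_of_derivative_le hx fun y _ ↦ hderiv y
  have hzero : (sPoly n).eval 0 = 1 := by simp [eval_sPoly, Finset.sum_range_succ']
  rwa [hzero, zero_sub, Real.exp_neg, ← div_eq_inv_mul, one_le_div₀ (Real.exp_pos x)] at hle

lemma eval_sPoly_nonneg_of_even {n : ℕ} (hn : Even n) (x : ℝ) : 0 ≤ (sPoly n).eval x := by
  rcases le_total 0 x with hx | hx
  · exact eval_sPoly_nonneg hx n
  · exact (Real.exp_pos x).le.trans (exp_le_eval_sPoly_of_even hn hx)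

end TruncatedExponential

section Nonnegativity

lemma pow_div_factorial_le_exp_neg_s8 {c y : ℝ} {n : ℕ} (hc : c * Real.exp 1 ≤ Real.exp (-c))
    (hc0 : 0 ≤ c) (hy : 0 ≤ y) (hyc : y ≤ c * n) : y ^ n / n.factorial ≤ Real.exp (-y) := calc
  y ^ n / n.factorial ≤ (c * n) ^ n / n.factorial := by gcongr
  _ = c ^ n * ((n : ℝ) ^ n / n.factorial) := by rw [mul_pow, mul_div_assoc]
  _ ≤ c ^ n * Real.exp n := by gcongr; exact Real.pow_div_factorial_le_exp _ n.cast_nonneg n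
  _ = (c * Real.exp 1) ^ n := by rw [mul_pow, ← Real.exp_nat_mul, mul_one]
  _ ≤ Real.exp (-c) ^ n := by gcongr
  _ = Real.exp (-(c * n)) := by rw [← Real.exp_nat_mul]; ring_nf
  _ ≤ Real.exp (-y) := by gcongr

lemma eval_sPoly_succ_add (m : ℕ) (c x : ℝ) :
    (sPoly (m + 1) + C c * sPoly m).eval x =
      (1 + c) * (sPoly (m + 1)).eval x - c * (x ^ (m + 1) / (m + 1).factorial) := by
  simp only [sPoly_succ, eval_add, eval_mul, eval_C, eval_pow, eval_X]
  ring

lemma eval_sPoly_add_nonneg_of_neg_mul_le {m : ℕ} (hm : Even (m + 1)) {c x : ℝ} (hc0 : 0 ≤ c)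
    (hc : c * Real.exp 1 ≤ Real.exp (-c)) (hcx : -(c * (m + 1 : ℕ)) ≤ x) (hx : x ≤ 0) :
    0 ≤ (sPoly (m + 1) + C c * sPoly m).eval x := by
  have hexp : Real.exp x ≤ (sPoly (m + 1)).eval x := exp_le_eval_sPoly_of_even hm hx
  have hpow : x ^ (m + 1) / (m + 1).factorial ≤ Real.exp x := by
    simpa only [hm.neg_pow, neg_neg] using
      pow_div_factorial_le_exp_neg_s8 hc hc0 (neg_nonneg.mpr hx) (neg_le.mp hcx)
  rw [eval_sPoly_succ_add, sub_nonneg]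
  calc c * (x ^ (m + 1) / (m + 1).factorial) ≤ c * (sPoly (m + 1)).eval x := by
        gcongr; exact hpow.trans hexp
    _ ≤ (1 + c) * (sPoly (m + 1)).eval x := by
        gcongr
        · exact eval_sPoly_nonneg_of_even hm x
        · linarith

lemma eval_derivative_sPoly_add_le_of_le_neg_mul {m : ℕ} (hm : Odd (m + 1)) {c x : ℝ} (hc : 0 ≤ c)
    (hx : x ≤ -(c * (m + 2 : ℕ))) :
    (sPoly (m + 2) + C c * sPoly (m + 1)).derivative.eval x ≤
      (sPoly (m + 2) + C c * sPoly (m + 1)).eval x := by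
  have hdiff : (sPoly (m + 2) + C c * sPoly (m + 1)).eval x -
      (sPoly (m + 2) + C c * sPoly (m + 1)).derivative.eval x =
      x ^ (m + 1) * (x + c * (m + 2 : ℕ)) / (m + 2).factorial := by
    rw [derivative_add, derivative_C_mul, derivative_sPoly_succ, derivative_sPoly_succ,
      sPoly_succ (m + 1), sPoly_succ m, Nat.factorial_succ (m + 1)]
    simp only [eval_add, eval_mul, eval_C, eval_pow, eval_X]
    push_cast
    field_simp
    ring
  have hx0 : x ≤ 0 := hx.trans (neg_nonpos.mpr (by positivity))
  rw [← sub_nonneg, hdiff]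
  exact div_nonneg (mul_nonneg_of_nonpos_of_nonpos (hm.pow_nonpos hx0) (by linarith))
    (Nat.cast_nonneg _)

theorem eval_sPoly_add_nonneg {m : ℕ} (hm : Odd (m + 1)) {c : ℝ} (hc1 : -1 ≤ c)
    (hc2 : c * Real.exp 1 ≤ Real.exp (-c)) (x : ℝ) :
    0 ≤ (sPoly (m + 2) + C c * sPoly (m + 1)).eval x := by
  have heven : Even (m + 2) := hm.add_one
  have hpow : 0 ≤ x ^ (m + 2) := heven.pow_nonneg x
  rcases le_total c 0 with hc | hc
  · rw [eval_sPoly_succ_add, sub_nonneg]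
    exact (mul_nonpos_of_nonpos_of_nonneg hc (by positivity)).trans
      (mul_nonneg (by linarith) (eval_sPoly_nonneg_of_even heven x))
  rcases le_total 0 x with hx | hx
  · rw [eval_add, eval_C_mul]
    exact add_nonneg (eval_sPoly_nonneg hx _) (mul_nonneg hc (eval_sPoly_nonneg hx _))
  rcases le_total (-(c * (m + 2 : ℕ))) x with hcx | hxc
  · exact eval_sPoly_add_nonneg_of_neg_mul_le heven hc hc2 hcx hx
  · have hend := eval_sPoly_add_nonneg_of_neg_mul_le heven hc hc2 le_rfl
      (neg_nonpos.mpr (by positivity))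
    have hgrowth := eval_le_exp_mul_eval_of_derivative_le hxc
      fun y hy ↦ eval_derivative_sPoly_add_le_of_le_neg_mul hm hc hy.2.le
    exact nonneg_of_mul_nonneg_right (hend.trans hgrowth) (Real.exp_pos _)

end Nonnegativity

section BoundedSumsOfSquares

lemma uniBounded_zero (d : ℕ) {A : ℝ} (hA : 0 ≤ A) : UniBounded d A 0 :=
  ⟨by simp, fun n _ ↦ by rw [coeff_zero, abs_zero]; positivity⟩

lemma UniSoSBounded.mono_left {k k' d : ℕ} {A : ℝ} {f : ℝ[X]} (hf : UniSoSBounded k d A f)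
    (hk : k ≤ k') (hA : 0 ≤ A) : UniSoSBounded k' d A f := by
  obtain ⟨g, hg, rfl⟩ := hf
  obtain ⟨l, rfl⟩ := Nat.exists_eq_add_of_le hk
  refine ⟨Fin.append g 0, fun i ↦ ?_, by simp [Fin.sum_univ_add]⟩
  induction i using Fin.addCases with
  | left i => simpa only [Fin.append_left] using hg i
  | right i => exact (Fin.append_right g 0 i).symm ▸ uniBounded_zero d hA

lemma five_fourths_mul_geom_sum_le_ten_pow {d : ℕ} (hd : 0 < d) :
    (5 / 4 : ℝ) * ∑ k ∈ Finset.range (d + 1), (11 / 2 : ℝ) ^ k ≤ 10 ^ d := by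
  induction d, hd using Nat.le_induction with
  | base => norm_num [Finset.sum_range_succ]
  | succ d _ ih =>
    have hpow : (11 / 2 : ℝ) ^ d ≤ 10 ^ d := by gcongr; norm_num
    have hpos : (0 : ℝ) < 10 ^ d := by positivity
    rw [Finset.sum_range_succ, pow_succ, pow_succ 10]
    linarith

-- `7 / 4` bounds `√e`, and `11 / 2 = 2 * (7 / 4 + 1)`.
lemma uniBounded_of_sq_eval_le_exp {d : ℕ} (hd : 0 < d) {q : ℝ[X]} (hdeg : q.natDegree ≤ d)
    (hq : ∀ j : ℕ, q.eval (j : ℝ) ^ 2 ≤ 5 / 4 * Real.exp j) : UniBounded d (10 ^ d) q := by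
  have hsqrt (j : ℕ) : |q.eval (j : ℝ)| ≤ 5 / 4 * (7 / 4) ^ j := by
    have hexp : Real.exp j ≤ ((7 / 4) ^ 2) ^ j := by
      rw [← Real.exp_one_pow]
      gcongr
      linarith [Real.exp_one_lt_d9]
    refine abs_le_of_sq_le_sq ((hq j).trans ?_) (by positivity)
    rw [mul_pow, ← pow_mul, mul_comm j, pow_mul]
    gcongr
    norm_num
  refine ⟨hdeg, fun n _ ↦ ?_⟩
  rw [le_div_iff₀' (by positivity)]
  calc n.factorial * |q.coeff n|
      ≤ 5 / 4 * ∑ k ∈ Finset.range (d + 1), (k.choose n : ℝ) * (7 / 4 + 1) ^ k :=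
        factorial_mul_abs_coeff_le_sum hdeg hsqrt n
    _ ≤ 5 / 4 * ∑ k ∈ Finset.range (d + 1), (11 / 2 : ℝ) ^ k := by
        gcongr with k
        calc (k.choose n : ℝ) * (7 / 4 + 1) ^ k ≤ 2 ^ k * (7 / 4 + 1) ^ k := by
              gcongr; exact_mod_cast Nat.choose_le_two_pow k n
          _ = (11 / 2) ^ k := by rw [← mul_pow]; norm_num
    _ ≤ 10 ^ d := five_fourths_mul_geom_sum_le_ten_pow hd

theorem uniSoSBounded_two_of_eval_le_exp {d : ℕ} (hd : 0 < d) {f : ℝ[X]}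
    (hdeg : f.natDegree ≤ 2 * d) (hf : ∀ x, 0 ≤ f.eval x)
    (hexp : ∀ j : ℕ, f.eval (j : ℝ) ≤ 5 / 4 * Real.exp j) : UniSoSBounded 2 d (10 ^ d) f := by
  obtain ⟨p, q, rfl⟩ := exists_eq_sq_add_sq_of_forall_eval_nonneg hf
  have hmax := (two_mul_max_natDegree_le_natDegree_sq_add_sq p q).trans hdeg
  simp only [eval_add, eval_pow] at hexp
  have hp : UniBounded d (10 ^ d) p := uniBounded_of_sq_eval_le_exp hd (by lia) fun j ↦
    (le_add_of_nonneg_right (sq_nonneg _)).trans (hexp j)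
  have hq : UniBounded d (10 ^ d) q := uniBounded_of_sq_eval_le_exp hd (by lia) fun j ↦
    (le_add_of_nonneg_left (sq_nonneg _)).trans (hexp j)
  exact ⟨![p, q], Fin.forall_fin_two.mpr ⟨hp, hq⟩, by simp [Fin.sum_univ_two]⟩

end BoundedSumsOfSquares

lemma natDegree_sPoly_add_le (m : ℕ) (c : ℝ) :
    (sPoly (m + 1) + C c * sPoly m).natDegree ≤ m + 1 :=
  natDegree_add_le_of_degree_le (natDegree_sPoly_le _)
    ((natDegree_C_mul_le _ _).trans ((natDegree_sPoly_le m).trans m.le_succ))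

lemma eval_sPoly_add_le_exp {b c x : ℝ} (hb : 0 ≤ b) (hc : c ≤ b) (hx : 0 ≤ x) (m n : ℕ) :
    (sPoly m + C c * sPoly n).eval x ≤ (1 + b) * Real.exp x := calc
  (sPoly m + C c * sPoly n).eval x = (sPoly m).eval x + c * (sPoly n).eval x := by
    rw [eval_add, eval_C_mul]
  _ ≤ Real.exp x + b * Real.exp x :=
    add_le_add (eval_sPoly_le_exp hx m)
      (mul_le_mul hc (eval_sPoly_le_exp hx n) (eval_sPoly_nonneg hx n) hb)
  _ = (1 + b) * Real.exp x := by ring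

theorem even_plus_odd_truncation_sos_general {ℓ : ℕ} (hℓ : 0 < ℓ) {c : ℝ} (hc1 : -1 ≤ c)
    (hc2 : c ≤ 1 / 4) :
    UniSoSBounded 2 ℓ (10 ^ ℓ) (sPoly (2 * ℓ) + C c * sPoly (2 * ℓ - 1)) := by
  obtain ⟨m, hm⟩ : ∃ m, 2 * ℓ = m + 2 := ⟨2 * ℓ - 2, by lia⟩
  have hm_odd : Odd (m + 1) := ⟨ℓ - 1, by lia⟩
  have hc_exp : c * Real.exp 1 ≤ Real.exp (-c) := calc
    c * Real.exp 1 ≤ 1 / 4 * Real.exp 1 := by gcongr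
    _ ≤ -c + 1 := by linarith [Real.exp_one_lt_d9]
    _ ≤ Real.exp (-c) := Real.add_one_le_exp (-c)
  rw [show 2 * ℓ - 1 = m + 1 by lia, hm]
  refine uniSoSBounded_two_of_eval_le_exp hℓ ?_ (eval_sPoly_add_nonneg hm_odd hc1 hc_exp)
    fun j ↦ ?_
  · rw [hm]
    exact natDegree_sPoly_add_le (m + 1) c
  · have h := eval_sPoly_add_le_exp (by norm_num) hc2 j.cast_nonneg (m + 2) (m + 1)
    linarith

/-- **Bounded coefficient polynomials** (Corollary B.3). For a positive integer `ℓ` and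
a real `c` with `-0.01 ≤ c ≤ 0.01`, the polynomial `s_{2ℓ} + c·s_{2ℓ-1}` is a
`(2^ℓ, ℓ, 10^ℓ)`-bounded sum-of-squares polynomial. -/
theorem even_plus_odd_truncation_sos (ℓ : ℕ) (hℓ : 0 < ℓ) (c : ℝ)
    (hc1 : -0.01 ≤ c) (hc2 : c ≤ 0.01) :
    UniSoSBounded (2 ^ ℓ) ℓ ((10 : ℝ) ^ ℓ)
      (sPoly (2 * ℓ) + Polynomial.C c * sPoly (2 * ℓ - 1)) :=
  (even_plus_odd_truncation_sos_general hℓ (by linarith) (by linarith)).mono_left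
    (Nat.le_self_pow hℓ.ne' 2) (by positivity)
end
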